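/- arXiv:1409.5213 — 2 statements merged into one kernel-verified Lean document; each statement's English description precedes it below -/
import Mathlib

section
/- Let G be a finite connected simple graph containing a vertex u of degree 1 and a vertex v of maximum degree Δ ≥ 2 such that u and v are not adjacent. Then mp(G+uv) ≤ mp(G), where G+uv is the graph obtained from G by adding the edge uv; in particular G is not saturated. -/
/-!
Put `G' = G + uv`. In `G'` the vertex `v` has strictly the largest degree and `u` has degree `2`,
and all other degrees are as in `G`. Take a path of `G'` along which the degrees do not decrease
(reverse it otherwise).

* If it avoids `u`, or starts at `u` with a step other than `uv`, then it is a path of `G` with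
  non-decreasing degrees in `G`.
* Otherwise it is `A, u` or `A, u, v`: were `u` an interior vertex, its two neighbours on the path
  would be `v` and its only neighbour in `G`, and `v` can only come last. So `A, u` is a path of `G`
  whose vertices all have degree at most `2`. Follow a path of `G` from `u` to `v` up to the first
  vertex `x` outside `S = A ∪ {u}`. The degrees met are `1, 2, …, 2, deg x` with `deg x ≥ 2`, which
  is monotone. The part before `x` contains all of `S`, since the neighbours
  of its vertices lie in it or equal `x`, and `S` is connected. Hence this path has at least `|A| + 2` vertices
  (`IsDegList.add_one_le_mp_of_low_degree`).
-/

open SimpleGraph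

variable {V : Type*}

/-- The degree of a vertex `v`: the number of neighbours of `v`. -/
noncomputable def gdeg (G : SimpleGraph V) (v : V) : ℕ := (G.neighborSet v).ncard

/-- A walk is degree monotone if the sequence of degrees of the vertices in the
order in which they appear on the walk is monotone (non-decreasing or non-increasing). -/
def IsDegMonotone (G : SimpleGraph V) {u v : V} (p : G.Walk u v) : Prop :=
  (p.support.map (gdeg G)).Chain' (· ≤ ·) ∨ (p.support.map (gdeg G)).Chain' (· ≥ ·)

/-- `mp G` is the maximum number of vertices of a degree monotone path in `G`. -/
noncomputable def mp (G : SimpleGraph V) : ℕ :=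
  sSup {n | ∃ (u v : V) (p : G.Walk u v), p.IsPath ∧ IsDegMonotone G p ∧ p.support.length = n}

/-- The graph obtained from `G` by adding the edge `uv`. -/
def addEdge (G : SimpleGraph V) (u v : V) : SimpleGraph V :=
  G ⊔ fromEdgeSet {s(u, v)}

/-- `G` is saturated if adding any edge between non-adjacent vertices increases `mp`. -/
def Saturated (G : SimpleGraph V) : Prop :=
  ∀ u v : V, u ≠ v → ¬ G.Adj u v → mp G < mp (addEdge G u v)

/-- `G` is `k`-saturated if `mp G < k` and adding any edge between non-adjacent
vertices creates a degree monotone path on at least `k` vertices. -/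
def KSaturated (k : ℕ) (G : SimpleGraph V) : Prop :=
  mp G < k ∧ ∀ u v : V, u ≠ v → ¬ G.Adj u v → k ≤ mp (addEdge G u v)

/-- `hSat n k` is the minimum number of edges of a `k`-saturated graph on `n` vertices. -/
noncomputable def hSat (n k : ℕ) : ℕ :=
  sInf {m | ∃ G : SimpleGraph (Fin n), KSaturated k G ∧ G.edgeSet.ncard = m}

/-! ### Monotone paths as lists of vertices -/

/-- A path of `G`, given by its list of vertices, along which degrees do not decrease.
The list is allowed to be empty. -/
def IsDegList (G : SimpleGraph V) (l : List V) : Prop :=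
  l.Nodup ∧ l.IsChain G.Adj ∧ l.Pairwise (fun a b => gdeg G a ≤ gdeg G b)

theorem IsDegList.length_le_mp [Fintype V] {G : SimpleGraph V} {l : List V} (hl : IsDegList G l) :
    l.length ≤ mp G := by
  by_cases hne : l = []
  · simp [hne]
  · obtain ⟨h1, h2, h3⟩ := hl
    refine le_csSup ⟨Fintype.card V, ?_⟩ ⟨_, _, Walk.ofSupport l hne h2, ?_, Or.inl ?_, ?_⟩
    · rintro n ⟨a, b, p, hp, -, rfl⟩
      exact hp.support_nodup.length_le_card
    · rw [Walk.isPath_def, Walk.support_ofSupport]; exact h1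
    · rw [Walk.support_ofSupport]
      exact (List.isChain_map _).2 h3.isChain
    · rw [Walk.support_ofSupport]

/-- It suffices to bound paths with non-decreasing degrees, the others being their reversals. -/
theorem mp_le_of_forall_isDegList {G : SimpleGraph V} {n : ℕ}
    (h : ∀ l, IsDegList G l → l.length ≤ n) : mp G ≤ n := by
  refine csSup_le' ?_
  rintro m ⟨a, b, p, hp, hmon, rfl⟩
  have key : ∀ {a b : V} (p : G.Walk a b), p.IsPath →
      (p.support.map (gdeg G)).IsChain (· ≤ ·) → p.support.length ≤ n := by
    intro a b p hp hc
    refine h _ ⟨hp.support_nodup, p.isChain_adj_support, ?_⟩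
    exact List.pairwise_map.1 hc.pairwise
  rcases hmon with hm | hm
  · exact key p hp hm
  · have := key p.reverse hp.reverse (by
      rw [Walk.support_reverse, List.map_reverse, List.isChain_reverse]; exact hm)
    simpa using this

/-! ### Small degrees -/

theorem one_le_gdeg [Fintype V] {G : SimpleGraph V} {x y : V} (h : G.Adj x y) : 1 ≤ gdeg G x :=
  (Set.ncard_pos (Set.toFinite _)).2 ⟨y, h⟩

theorem two_le_gdeg [Fintype V] {G : SimpleGraph V} {x y z : V} (h : G.Adj x y) (h' : G.Adj x z)
    (hyz : y ≠ z) : 2 ≤ gdeg G x := by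
  rw [← Set.ncard_pair hyz]
  refine Set.ncard_le_ncard ?_ (Set.toFinite _)
  rintro w (rfl | rfl) <;> assumption

theorem eq_of_gdeg_eq_one [Fintype V] {G : SimpleGraph V} {x y z : V} (hx : gdeg G x = 1)
    (h : G.Adj x y) (h' : G.Adj x z) : y = z := by
  by_contra hne
  have := two_le_gdeg h h' hne
  omega

theorem eq_or_eq_of_gdeg_le_two [Fintype V] {G : SimpleGraph V} {x y z w : V} (hx : gdeg G x ≤ 2)
    (h : G.Adj x y) (h' : G.Adj x z) (hyz : y ≠ z) (hw : G.Adj x w) : w = y ∨ w = z := by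
  have : ({y, z} : Set V) = G.neighborSet x := by
    refine Set.eq_of_subset_of_ncard_le ?_ (by rw [Set.ncard_pair hyz]; exact hx) (Set.toFinite _)
    rintro w (rfl | rfl) <;> assumption
  have hw' : w ∈ ({y, z} : Set V) := this ▸ hw
  simpa using hw'

/-! ### Lengthening a path of low degree that ends in a leaf -/

/-- If `T` contains the last vertex `u` of the path `A, u`, and every neighbour in `A` of a member of
`T` is in `T`, then `T` contains the whole path. -/
theorem subset_of_closed {G : SimpleGraph V} {T : List V} {u : V} (hu : u ∈ T) :
    ∀ A : List V, (A ++ [u]).IsChain G.Adj →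
      (∀ t ∈ T, ∀ y ∈ A, G.Adj t y → y ∈ T) → A ++ [u] ⊆ T
  | [], _, _ => by simpa using hu
  | a :: A, hc, hT => by
    have ih := subset_of_closed hu A hc.tail
      (fun t ht y hy h => hT t ht y (List.mem_cons_of_mem _ hy) h)
    intro z hz
    rcases List.mem_cons.1 hz with rfl | hz
    · cases A with
      | nil =>
        have : G.Adj z u := by simpa using hc
        exact hT u hu z (by simp) this.symm
      | cons b A =>
        have : G.Adj z b := (List.isChain_cons_cons.1 hc).1
        exact hT b (ih (by simp)) z (by simp) this.symm
    · exact ih hz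

/-- A path of vertices of degree at most `2` that ends in the leaf `u` and misses a vertex `v` of
degree at least `2` can be lengthened to a path with non-decreasing degrees, which runs from `u`
towards `v`. -/
theorem IsDegList.add_one_le_mp_of_low_degree [Fintype V] {G : SimpleGraph V} (hconn : G.Connected)
    {u v : V} (hu : gdeg G u = 1) (hv : 2 ≤ gdeg G v) {A : List V} (hnd : (A ++ [u]).Nodup)
    (hc : (A ++ [u]).IsChain G.Adj) (hlow : ∀ a ∈ A, gdeg G a ≤ 2) (hvA : v ∉ A) :
    A.length + 2 ≤ mp G := by
  classical
  have huv : u ≠ v := by rintro rfl; omega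
  obtain ⟨q, hq⟩ := hconn.exists_isPath u v
  have hqn := hq.support_nodup
  have hqc := q.isChain_adj_support
  -- `T` is the initial segment inside `S = A ∪ {u}`, and `x` is the first vertex after it.
  obtain ⟨T, x, R, hQ, hTS, hxS⟩ : ∃ T x R, q.support = T ++ x :: R ∧
      (∀ t ∈ T, t ∈ A ++ [u]) ∧ x ∉ A ++ [u] := by
    have hsplit := List.takeWhile_append_dropWhile (p := fun z => decide (z ∈ A ++ [u]))
      (l := q.support)
    cases hd : q.support.dropWhile (fun z => decide (z ∈ A ++ [u])) with
    | nil =>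
      rw [List.dropWhile_eq_nil_iff] at hd
      have := hd v q.end_mem_support
      simp [hvA, huv.symm] at this
    | cons x R =>
      refine ⟨_, x, R, by rw [← hd]; exact hsplit.symm, ?_, ?_⟩
      · intro t ht
        simpa using List.mem_takeWhile_imp ht
      · have := List.head?_dropWhile_not (fun z => decide (z ∈ A ++ [u])) q.support
        rw [hd] at this
        simpa using this
  obtain ⟨M, rfl⟩ : ∃ M, T = u :: M := by
    have h0 : q.support.head? = some u := by
      rw [← q.cons_tail_support]; rfl
    cases T with
    | nil =>
      rw [hQ] at h0
      simp at h0
      simp [h0] at hxS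
    | cons t M =>
      rw [hQ] at h0
      simp at h0
      exact ⟨M, by rw [h0]⟩
  rw [hQ] at hqn hqc
  -- A vertex with a predecessor and a successor on the path has these as distinct neighbours.
  have hinner : ∀ B p t n C, q.support = B ++ p :: t :: n :: C →
      G.Adj t p ∧ G.Adj t n ∧ p ≠ n := by
    intro B p t n C h
    have h1 := q.isChain_adj_support
    have h2 := hq.support_nodup
    rw [h] at h1 h2
    have h3 := h1.right_of_append
    rw [List.isChain_cons_cons, List.isChain_cons_cons] at h3
    have h4 := (List.nodup_append.1 h2).2.1
    refine ⟨h3.1.symm, h3.2.1, ?_⟩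
    rintro rfl
    simp at h4
  have hM : ∀ t ∈ M, ∃ p n, p ∈ u :: M ∧ (n ∈ u :: M ∨ n = x) ∧
      G.Adj t p ∧ G.Adj t n ∧ p ≠ n := by
    intro t ht
    obtain ⟨B, C, rfl⟩ := List.append_of_mem ht
    obtain ⟨B', p, hB⟩ : ∃ B' p, u :: B = B' ++ [p] :=
      ⟨_, _, (List.dropLast_append_getLast (List.cons_ne_nil u B)).symm⟩
    obtain ⟨n, C', hC⟩ : ∃ n C', C ++ x :: R = n :: C' ∧ (n ∈ C ∨ n = x) := by
      cases C with
      | nil => exact ⟨x, R, by simp⟩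
      | cons n C => exact ⟨n, C ++ x :: R, by simp⟩
    have hp : p ∈ u :: B := by rw [hB]; simp
    refine ⟨p, n, ?_, ?_, hinner B' p t n C' ?_⟩
    · rcases List.mem_cons.1 hp with h | h <;> simp [h]
    · rcases hC.2 with h | h <;> simp [h]
    · rw [hQ]
      calc (u :: (B ++ t :: C)) ++ x :: R = (u :: B) ++ t :: (C ++ x :: R) := by simp
        _ = _ := by rw [hB, hC.1]; simp
  have hMA : ∀ t ∈ M, gdeg G t = 2 := by
    intro t ht
    obtain ⟨p, n, -, -, h1, h2, h3⟩ := hM t ht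
    have htu : t ≠ u := by
      rintro rfl
      simp [ht] at hqn
    have htA : t ∈ A := by
      have := hTS t (List.mem_cons_of_mem _ ht)
      simpa [htu] using this
    exact le_antisymm (hlow t htA) (two_le_gdeg h1 h2 h3)
  have hx : 2 ≤ gdeg G x := by
    cases R with
    | nil =>
      have h0 : q.support.getLast? = some v := by
        rw [List.getLast?_eq_some_getLast q.support_ne_nil, Walk.getLast_support]
      rw [hQ, List.getLast?_concat, Option.some_inj] at h0
      rw [h0]; exact hv
    | cons n R =>
      obtain ⟨B', p, hB⟩ : ∃ B' p, u :: M = B' ++ [p] :=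
        ⟨_, _, (List.dropLast_append_getLast (List.cons_ne_nil u M)).symm⟩
      obtain ⟨h1, h2, h3⟩ := hinner B' p x n R (by rw [hQ, hB]; simp)
      exact two_le_gdeg h1 h2 h3
  have hdeg : IsDegList G (u :: M ++ [x]) := by
    have hpre : (u :: M ++ [x]) <+: (u :: M ++ x :: R) := ⟨R, by simp⟩
    refine ⟨hqn.sublist hpre.sublist, hqc.prefix hpre, ?_⟩
    rw [List.cons_append, List.pairwise_cons, List.pairwise_append]
    refine ⟨?_, ?_, by simp, ?_⟩
    · intro z hz
      rw [hu]
      rcases List.mem_append.1 hz with h | h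
      · rw [hMA z h]; omega
      · rw [List.mem_singleton.1 h]; omega
    · refine List.Pairwise.imp_of_mem (R := fun _ _ => True) ?_ (List.pairwise_iff_getElem.2 (by simp))
      intro a b ha hb _
      rw [hMA a ha, hMA b hb]
    · intro a ha b hb
      rw [hMA a ha, List.mem_singleton.1 hb]; exact hx
  have hsub : A ++ [u] ⊆ u :: M := by
    refine subset_of_closed (by simp) A hc ?_
    intro t ht y hy hadj
    have hyx : y ≠ x := by
      rintro rfl
      simp [hy] at hxS
    rcases List.mem_cons.1 ht with rfl | ht
    · cases M with
      | nil =>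
        have : G.Adj t x := by
          have := hqc; simp at this; exact this.1
        exact absurd (eq_of_gdeg_eq_one hu hadj this) hyx
      | cons m M =>
        have : G.Adj t m := by
          have := hqc; simp at this; exact this.1
        rw [eq_of_gdeg_eq_one hu hadj this]; simp
    · obtain ⟨p, n, hp, hn, h1, h2, h3⟩ := hM t ht
      rcases eq_or_eq_of_gdeg_le_two (hMA t ht).le h1 h2 h3 hadj with rfl | rfl
      · exact hp
      · exact hn.resolve_right hyx
  have h1 := (List.subperm_of_subset hnd hsub).length_le
  have h2 := hdeg.length_le_mp
  simp at h1 h2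
  omega

/-! ### Degrees after adding an edge -/

theorem addEdge_adj {G : SimpleGraph V} {u v a b : V} :
    (addEdge G u v).Adj a b ↔ G.Adj a b ∨ (((a = u ∧ b = v) ∨ (a = v ∧ b = u)) ∧ a ≠ b) := by
  simp [addEdge]

theorem gdeg_addEdge_left [Fintype V] {G : SimpleGraph V} {u v : V} (huv : u ≠ v)
    (hnadj : ¬ G.Adj u v) : gdeg (addEdge G u v) u = gdeg G u + 1 := by
  have : (addEdge G u v).neighborSet u = insert v (G.neighborSet u) := by
    ext z
    simp only [mem_neighborSet, addEdge_adj, Set.mem_insert_iff]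
    grind
  rw [gdeg, this, Set.ncard_insert_of_notMem (s := G.neighborSet u) hnadj (Set.toFinite _), gdeg]

theorem addEdge_comm (G : SimpleGraph V) (u v : V) : addEdge G u v = addEdge G v u := by
  rw [addEdge, addEdge, Sym2.eq_swap]

theorem gdeg_addEdge_of_ne {G : SimpleGraph V} {u v x : V} (hu : x ≠ u) (hv : x ≠ v) :
    gdeg (addEdge G u v) x = gdeg G x := by
  have : (addEdge G u v).neighborSet x = G.neighborSet x := by
    ext z
    simp only [mem_neighborSet, addEdge_adj]
    grind
  rw [gdeg, this, gdeg]

/-! ### Comparing the monotone paths of the two graphs -/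

theorem stmt_1 [Fintype V] (G : SimpleGraph V) (hconn : G.Connected) (u v : V)
    (hu : gdeg G u = 1) (hmax : ∀ w : V, gdeg G w ≤ gdeg G v) (hΔ : 2 ≤ gdeg G v)
    (hnadj : ¬ G.Adj u v) :
    mp (addEdge G u v) ≤ mp G ∧ ¬ Saturated G := by
  have huv : u ≠ v := by rintro rfl; omega
  suffices h : mp (addEdge G u v) ≤ mp G from ⟨h, fun hs => absurd (hs u v huv hnadj) h.not_gt⟩
  have hdu : gdeg (addEdge G u v) u = 2 := by rw [gdeg_addEdge_left huv hnadj, hu]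
  have hdv : gdeg (addEdge G u v) v = gdeg G v + 1 := by
    rw [addEdge_comm, gdeg_addEdge_left huv.symm (fun h => hnadj h.symm)]
  have hd : ∀ x, x ≠ u → x ≠ v → gdeg (addEdge G u v) x = gdeg G x :=
    fun x h h' => gdeg_addEdge_of_ne h h'
  have hpos : ∀ x, 1 ≤ gdeg G x := by
    have : Nontrivial V := ⟨u, v, huv⟩
    intro x
    obtain ⟨y, hy⟩ := hconn.preconnected.exists_adj_of_nontrivial x
    exact one_le_gdeg hy
  -- Comparisons of degrees in `G + uv` persist in `G`, unless the larger one is that of `u`.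
  have hmono : ∀ a b, b ≠ u → gdeg (addEdge G u v) a ≤ gdeg (addEdge G u v) b →
      gdeg G a ≤ gdeg G b := by
    intro a b hb hab
    by_cases hau : a = u
    · rw [hau, hu]; exact hpos b
    by_cases hbv : b = v
    · rw [hbv]; exact hmax a
    by_cases hav : a = v
    · rw [hav, hdv, hd b hb hbv] at hab
      have := hmax b
      omega
    · rwa [hd a hau hav, hd b hb hbv] at hab
  have hadj : ∀ a b, (addEdge G u v).Adj a b → (a = u → b ≠ v) → b ≠ u → G.Adj a b := by
    intro a b h h1 h2
    rw [addEdge_adj] at h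
    grind
  have hvlast : ∀ b, gdeg (addEdge G u v) v ≤ gdeg (addEdge G u v) b → b = v := by
    intro b hb
    by_contra hbv
    have := hmax b
    by_cases hbu : b = u
    · rw [hbu] at hb; omega
    · rw [hd b hbu hbv] at hb; omega
  refine mp_le_of_forall_isDegList ?_
  rintro l ⟨hnd, hc, hp⟩
  by_cases hul : u ∈ l
  swap
  · have hne : ∀ a ∈ l, a ≠ u := fun a ha h => hul (h ▸ ha)
    refine IsDegList.length_le_mp ⟨hnd, ?_, ?_⟩
    · exact hc.imp_of_mem_imp fun a b ha hb h => hadj a b h (fun h' => absurd h' (hne a ha)) (hne b hb)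
    · exact hp.imp_of_mem fun {a b} ha hb h => hmono a b (hne b hb) h
  obtain ⟨A, B, rfl⟩ := List.append_of_mem hul
  have hndB : u ∉ B ∧ B.Nodup := List.nodup_cons.1 (List.nodup_append.1 hnd).2.1
  have hpA := List.pairwise_append.1 hp
  have hpB := List.pairwise_cons.1 hpA.2.1
  have hlowA : ∀ a ∈ A, gdeg (addEdge G u v) a ≤ 2 := fun a ha =>
    hdu ▸ hpA.2.2 a ha u (by simp)
  have hAu : ∀ a ∈ A, a ≠ u := fun a ha h =>
    (List.nodup_append.1 hnd).2.2 a ha u (by simp) h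
  have hAv : ∀ a ∈ A, a ≠ v := by
    rintro a ha rfl
    have := hlowA a ha
    omega
  have hcA : (A ++ [u]).IsChain (addEdge G u v).Adj := (List.isChain_split.1 hc).1
  have hcB : (u :: B).IsChain (addEdge G u v).Adj := (List.isChain_split.1 hc).2
  -- The path ends at most one step after `u`.
  have hshort : B.length ≤ 1 → (A ++ u :: B).length ≤ mp G := by
    intro hB
    have := IsDegList.add_one_le_mp_of_low_degree hconn hu hΔ (A := A)
      (hnd.sublist (by simp)) (hcA.imp_of_mem_imp ?_)
      (fun a ha => hd a (hAu a ha) (hAv a ha) ▸ hlowA a ha) (fun h => hAv v h rfl)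
    · simp only [List.length_append, List.length_cons]; omega
    · intro a b ha hb h
      have ha' : a ≠ v := by
        rcases List.mem_append.1 ha with h | h
        · exact hAv a h
        · rw [List.mem_singleton.1 h]; exact huv
      have hb' : b ≠ v := by
        rcases List.mem_append.1 hb with h | h
        · exact hAv b h
        · rw [List.mem_singleton.1 h]; exact huv
      rw [addEdge_adj] at h
      grind
  cases B with
  | nil => exact hshort (by simp)
  | cons b B =>
    by_cases hbv : b = v
    · subst hbv
      refine hshort ?_
      cases B with
      | nil => simp
      | cons c B =>
        have hcv := hvlast c ((List.pairwise_cons.1 hpB.2).1 c (by simp))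
        have := hndB.2
        simp [hcv] at this
    have hub : G.Adj u b := hadj u b (List.isChain_cons_cons.1 hcB).1 (fun _ => hbv)
      (fun h => hndB.1 (by simp [h]))
    rcases A.eq_nil_or_concat with rfl | ⟨A', a, rfl⟩
    · refine IsDegList.length_le_mp ⟨hnd, ?_, ?_⟩
      · refine List.isChain_cons_cons.2 ⟨hub, ?_⟩
        refine (List.isChain_cons_cons.1 hcB).2.imp_of_mem_imp fun x y hx hy h => ?_
        exact hadj x y h (fun h' => absurd (h' ▸ hx) hndB.1) (fun h' => hndB.1 (h' ▸ hy))
      · refine List.pairwise_cons.2 ⟨fun x _ => hu ▸ hpos x, ?_⟩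
        exact hpB.2.imp_of_mem fun {x y} _ hy h => hmono x y (fun h' => hndB.1 (h' ▸ hy)) h
    · exfalso
      -- Here `u` would have the two distinct neighbours `a` and `b` in `G`.
      have haA : a ∈ A'.concat a := by simp
      have hau : (addEdge G u v).Adj a u := by
        have h := hcA
        simp only [List.concat_eq_append, List.append_assoc, List.cons_append, List.nil_append] at h
        simpa using h.right_of_append
      have hua : G.Adj u a := hadj u a hau.symm (fun _ => hAv a haA) (hAu a haA)
      exact (List.nodup_append.1 hnd).2.2 a haA b (by simp) (eq_of_gdeg_eq_one hu hua hub)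
end

section
/- Let t ≥ 1 be an integer and let G = P_3 □ K_t be the Cartesian product of the path on 3 vertices with the complete graph on t vertices. Then mp(G) = 2t. -/
/-! In `P₃ □ K_t` the vertices of the two outer copies of `K_t` have degree `t`, those of the middle
copy degree `t + 1`. Up to reversal, a degree monotone path has non-decreasing degrees, so it first
visits outer vertices and then only middle ones. Since distinct outer copies are not joined by an
edge, all its outer vertices lie in a single copy; hence the path lies in the union of two copies
of `K_t` and has at most `2 * t` vertices (`length_le_of_isChain`). Conversely, traversing an outer
copy and then the middle one in the opposite order (`snake`) yields such a path on `2 * t` vertices. -/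

open SimpleGraph

variable {V : Type*}

/-- In `P₃ □ K_t` the middle copy of `K_t` has degree `t + 1`, the outer copies degree `t`. -/
theorem gdeg_pathGraph_three_boxProd {t : ℕ} (x : Fin 3 × Fin t) :
    gdeg (pathGraph 3 □ (⊤ : SimpleGraph (Fin t))) x = t + if x.1 = 1 then 1 else 0 := by
  classical
  have hP : ∀ i : Fin 3, (pathGraph 3).degree i = 1 + if i = 1 then 1 else 0 := by
    intro i
    have h : (pathGraph 3).neighborFinset i
        = Finset.univ.filter fun j : Fin 3 ↦ i.val + 1 = j.val ∨ j.val + 1 = i.val := by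
      ext j; simp [pathGraph_adj]
    rw [← card_neighborFinset_eq_degree, h]
    clear h
    revert i; decide
  have ht : 0 < t := x.2.pos
  rw [gdeg, Set.ncard_eq_toFinset_card', Set.toFinset_card, card_neighborSet_eq_degree,
    degree_boxProd, hP, complete_graph_degree, Fintype.card_fin]
  omega

/-- A path along which degrees do not decrease can leave a copy of `K_t` only for the middle
copy. This relation between endpoints of a step is transitive, so it propagates along the path. -/
theorem fst_eq_or_of_adj_of_gdeg_le {t : ℕ} {x y : Fin 3 × Fin t}
    (h : (pathGraph 3 □ (⊤ : SimpleGraph (Fin t))).Adj x y)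
    (hd : gdeg (pathGraph 3 □ (⊤ : SimpleGraph (Fin t))) x
      ≤ gdeg (pathGraph 3 □ (⊤ : SimpleGraph (Fin t))) y) :
    y.1 = x.1 ∨ y.1 = 1 := by
  rw [gdeg_pathGraph_three_boxProd, gdeg_pathGraph_three_boxProd] at hd
  rw [boxProd_adj, pathGraph_adj] at h
  obtain ⟨i, a⟩ := x
  obtain ⟨j, b⟩ := y
  dsimp only at *
  rcases h with ⟨h, -⟩ | ⟨-, h⟩
  · fin_cases i <;> fin_cases j <;> simp_all
  · exact .inl h.symm

theorem length_le_of_isChain {t : ℕ} {l : List (Fin 3 × Fin t)} (hn : l.Nodup)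
    (ha : l.IsChain (pathGraph 3 □ (⊤ : SimpleGraph (Fin t))).Adj)
    (hd : (l.map (gdeg (pathGraph 3 □ (⊤ : SimpleGraph (Fin t))))).IsChain (· ≤ ·)) :
    l.length ≤ 2 * t := by
  rw [List.isChain_map] at hd
  have hS : l.IsChain fun x y ↦ y.1 = x.1 ∨ y.1 = 1 := by
    rw [List.isChain_iff_getElem] at ha hd ⊢
    exact fun i hi ↦ fst_eq_or_of_adj_of_gdeg_le (ha i hi) (hd i hi)
  cases l with
  | nil => simp
  | cons a l =>
    have : IsTrans (Fin 3 × Fin t) fun x y ↦ y.1 = x.1 ∨ y.1 = 1 := ⟨fun _ _ _ h₁ h₂ ↦ by grind⟩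
    have hp := (List.pairwise_cons.1 hS.pairwise).1
    have hsub : (a :: l).toFinset ⊆ ({a.1, 1} : Finset (Fin 3)) ×ˢ Finset.univ := by
      intro x hx
      rw [List.mem_toFinset, List.mem_cons] at hx
      rcases hx with rfl | hx
      · simp
      · simpa using hp x hx
    rw [← List.toFinset_card_of_nodup hn]
    refine (Finset.card_le_card hsub).trans ?_
    rw [Finset.card_product, Finset.card_univ, Fintype.card_fin]
    exact Nat.mul_le_mul_right _ Finset.card_le_two

/-- The list of vertices of a longest degree monotone path: an outer copy of `K_t` is traversed
in order, then the middle copy in reverse order. -/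
def snake (t : ℕ) : List (Fin 3 × Fin t) :=
  (List.finRange t).map (Prod.mk 0) ++ (List.finRange t).reverse.map (Prod.mk 1)

theorem nodup_snake (t : ℕ) : (snake t).Nodup := by
  refine List.Nodup.append ((List.nodup_finRange t).map (Prod.mk_right_injective 0))
    ((List.nodup_reverse.2 (List.nodup_finRange t)).map (Prod.mk_right_injective 1)) ?_
  intro x h₀ h₁
  simp only [List.mem_map] at h₀ h₁
  grind

theorem isChain_snake (t : ℕ) :
    (snake t).IsChain fun x y ↦ (pathGraph 3 □ (⊤ : SimpleGraph (Fin t))).Adj x y ∧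
      gdeg (pathGraph 3 □ (⊤ : SimpleGraph (Fin t))) x
        ≤ gdeg (pathGraph 3 □ (⊤ : SimpleGraph (Fin t))) y := by
  have hn := List.nodup_finRange t
  simp only [gdeg_pathGraph_three_boxProd]
  refine List.IsChain.append ?_ ?_ ?_
  · rw [List.isChain_map]
    exact (List.Pairwise.imp (fun h ↦ by simpa [boxProd_adj] using h) hn).isChain
  · rw [List.isChain_map]
    exact (List.Pairwise.imp (fun h ↦ by simpa [boxProd_adj] using h)
      (List.nodup_reverse.2 hn)).isChain
  · intro x hx y hy
    rw [List.getLast?_map, Option.mem_map] at hx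
    rw [List.head?_map, List.head?_reverse, Option.mem_map] at hy
    obtain ⟨a, ha, rfl⟩ := hx
    obtain ⟨b, hb, rfl⟩ := hy
    obtain rfl := Option.mem_unique ha hb
    simp [boxProd_adj, pathGraph_adj]

theorem stmt_5 (t : ℕ) (ht : 1 ≤ t) :
    mp (pathGraph 3 □ (⊤ : SimpleGraph (Fin t))) = 2 * t := by
  refine IsGreatest.csSup_eq ⟨?_, ?_⟩
  · have hlen : (snake t).length = 2 * t := by simp [snake]; omega
    have hne : snake t ≠ [] := by
      rw [← List.length_pos_iff]; omega
    refine ⟨_, _, Walk.ofSupport (snake t) hne ((isChain_snake t).imp fun _ _ h ↦ h.1), ?_, ?_, ?_⟩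
    · rw [Walk.isPath_def, Walk.support_ofSupport]
      exact nodup_snake t
    · left
      rw [Walk.support_ofSupport]
      exact (List.isChain_map _).2 ((isChain_snake t).imp fun _ _ h ↦ h.2)
    · rw [Walk.support_ofSupport, hlen]
  · rintro n ⟨u, v, p, hp, hd | hd, rfl⟩
    · exact length_le_of_isChain hp.support_nodup p.isChain_adj_support hd
    -- Reversing a path with non-increasing degrees reduces to the non-decreasing case.
    · rw [← List.length_reverse, ← Walk.support_reverse]
      refine length_le_of_isChain hp.reverse.support_nodup p.reverse.isChain_adj_support ?_
      rw [Walk.support_reverse, List.map_reverse, List.isChain_reverse]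
      exact hd
end
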